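/- arXiv:1906.06122 — 2 statements merged into one kernel-verified Lean document; each statement's English description precedes it below -/
import Mathlib

section
/- (Second inclusion of Theorem 2, edge version.) Let (X,d) be a metric space, P ⊆ X a point cloud, L ⊆ P an ε-net of P for ε > 0, and α ≥ 2ε a real number. If x, y ∈ L are such that there exists a witness w ∈ P with d(w,x) ≤ d¹(w) + α and d(w,y) ≤ d¹(w) + α, where d¹(w) = infDist(w, L), then d(x,y) ≤ 3α; that is, every edge of the lazy witness complex LW_α(P, L, 1) is an edge of the Vietoris–Rips complex R_{3α}(L). -/
/-- Second inclusion of Theorem 2 (edge version): if `L ⊆ P` is an `ε`-net, `α ≥ 2ε`, and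
`x, y ∈ L` are witnessed by some `w ∈ P` (i.e. `[x y]` is an edge of `LW_α(P, L, 1)`),
then `d(x,y) ≤ 3α`, i.e. `[x y]` is an edge of the Vietoris–Rips complex `R_{3α}(L)`. -/
theorem lazyWitness_edge_mem_rips {X : Type*} [MetricSpace X]
    (P L : Set X) (ε α : ℝ) (hε : 0 < ε) (hLP : L ⊆ P)
    (hsparse : ∀ x ∈ L, ∀ y ∈ L, x ≠ y → ε < dist x y)
    (hsample : ∀ p ∈ P, ∃ q ∈ L, dist p q ≤ ε)
    (hα : 2 * ε ≤ α)
    (x y : X) (hx : x ∈ L) (hy : y ∈ L)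
    (hwitness : ∃ w ∈ P, dist w x ≤ Metric.infDist w L + α ∧
      dist w y ≤ Metric.infDist w L + α) :
    dist x y ≤ 3 * α := by
  obtain ⟨w, hw, hwx, hwy⟩ := hwitness
  obtain ⟨q, hq, hwq⟩ := hsample w hw
  -- The sampling property gives `d¹(w) ≤ ε`, so `d(x, y) ≤ 2 (ε + α) ≤ 3α`.
  have hd : Metric.infDist w L ≤ ε := (Metric.infDist_le_dist_of_mem hq).trans hwq
  linarith [dist_triangle_left x y w]
end

section
/- (Second inclusion of Theorem 2, simplex version.) Let (X,d) be a metric space, P ⊆ X a point cloud, L ⊆ P an ε-net of P for ε > 0, and α ≥ 2ε. Let σ be a finite subset of L such that for every pair of points x, y ∈ σ there exists a witness w ∈ P with d(w,x) ≤ d¹(w) + α and d(w,y) ≤ d¹(w) + α, where d¹(w) = infDist(w, L) (i.e. σ is a simplex of the lazy witness complex LW_α(P, L, 1)). Then all pairwise distances in σ are at most 3α; that is, σ is a simplex of the Vietoris–Rips complex R_{3α}(L). -/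
/-- Second inclusion of Theorem 2 (simplex version): if `L ⊆ P` is an `ε`-net, `α ≥ 2ε`,
and `σ` is a finite subset of `L` which is a simplex of the lazy witness complex
`LW_α(P, L, 1)`, then all pairwise distances in `σ` are at most `3α`, i.e. `σ` is a
simplex of the Vietoris–Rips complex `R_{3α}(L)`. -/
theorem lazyWitness_simplex_mem_rips {X : Type*} [MetricSpace X]
    (P L : Set X) (ε α : ℝ) (hε : 0 < ε) (hLP : L ⊆ P)
    (hsparse : ∀ x ∈ L, ∀ y ∈ L, x ≠ y → ε < dist x y)
    (hsample : ∀ p ∈ P, ∃ q ∈ L, dist p q ≤ ε)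
    (hα : 2 * ε ≤ α)
    (σ : Finset X) (hσL : ↑σ ⊆ L)
    (hσ : ∀ x ∈ σ, ∀ y ∈ σ,
      ∃ w ∈ P, dist w x ≤ Metric.infDist w L + α ∧ dist w y ≤ Metric.infDist w L + α) :
    ∀ x ∈ σ, ∀ y ∈ σ, dist x y ≤ 3 * α := by
  intro x hx y hy
  obtain ⟨w, hwP, hwx, hwy⟩ := hσ x hx y hy
  obtain ⟨q, hqL, hwq⟩ := hsample w hwP
  -- Since `d¹(w) ≤ ε`, going through `w` gives `d(x, y) ≤ 2(ε + α) ≤ 3α`.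
  have hinf : Metric.infDist w L ≤ ε := (Metric.infDist_le_dist_of_mem hqL).trans hwq
  linarith [dist_triangle_left x y w]
end
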